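/- Let $n \geq 3$ and $0 < 2\rho < \rho_0 < \rho_1 < \rho_2 < 1$. Let $G(x,y)$ be the Green's function of $-\Delta$ on the annulus $B_1(0) \setminus \bar B_\rho(0) \subset \mathbb{R}^n$. Then there exists a constant $C > 1$, depending only on $n, \rho_0, \rho_1, \rho_2$ (and not on $\rho$), such that $G(x,y) \geq \frac{1}{C}\big(1 - \frac{\rho^{n-2}}{|y|^{n-2}}\big)$ for all $\rho \leq |y| \leq \rho_0$ and $\rho_1 \leq |x| \leq \rho_2$. In particular $G(x,y) \geq 1/C'$ for all $2\rho \leq |y| \leq \rho_0$ and $\rho_1 \leq |x| \leq \rho_2$, with $C'$ depending only on $n, \rho_0, \rho_1, \rho_2$. -/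

import Mathlib

open Metric Set MeasureTheory

/-- The (flat) Laplacian, as the sum of the second partial derivatives. -/
noncomputable def lap {n : ℕ} (u : EuclideanSpace ℝ (Fin n) → ℝ)
    (x : EuclideanSpace ℝ (Fin n)) : ℝ :=
  ∑ i, fderiv ℝ (fun y => fderiv ℝ u y (EuclideanSpace.single i 1)) x
    (EuclideanSpace.single i 1)

/-!
The Green's function with pole `x` is bounded below near `x`, because the minimum principle bounds
the harmonic corrector by the largest value of the Newton kernel on the boundary, and the same
principle makes the Green's function nonnegative. On each ball of radius `4 * r` in the domain,
comparison with a radial harmonic barrier shows that a lower bound on the concentric ball of radius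
`r` persists on the ball of radius `2 * r` up to the factor `1 / (2 ^ (n - 2) + 1)`. Iterating this
along chains of balls centred in the compact annulus `ρ₀ ≤ |y| ≤ ρ₂` gives a lower bound there, and
both `r` and the number of balls depend on `ρ₀` and `ρ₂` only. A last comparison, in `ρ ≤ |y| ≤ ρ₀`
with the barrier `c (1 - ρ ^ (n - 2) / |y| ^ (n - 2))`, concludes.
-/

section

open Filter InnerProductSpace Laplacian Module Topology

theorem exists_one_lt_one_div_le {ε : ℝ} (hε : 0 < ε) : ∃ C : ℝ, 1 < C ∧ 1 / C ≤ ε :=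
  ⟨1 + 1 / ε, lt_add_of_pos_right 1 (by positivity),
    (one_div_le (by positivity) hε).mpr (le_add_of_nonneg_left zero_le_one)⟩

theorem half_le_one_sub_pow_div_pow {m : ℕ} {s t : ℝ} (hm : m ≠ 0) (hs : 0 < s)
    (hst : 2 * s ≤ t) : 1 / 2 ≤ 1 - s ^ m / t ^ m := by
  have ht : 0 < t := by linarith
  have hhalf : s / t ≤ 1 / 2 := by
    rw [div_le_iff₀ ht]
    linarith
  have hpow : (s / t) ^ m ≤ s / t := pow_le_of_le_one (by positivity) (by linarith) hm
  rw [← div_pow]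
  linarith

theorem deriv_deriv_nonneg_of_isLocalMin {f : ℝ → ℝ} {t : ℝ} (hf : ContinuousAt f t)
    (hmin : IsLocalMin f t) : 0 ≤ deriv (deriv f) t := by
  by_contra! hneg
  have hmax : IsLocalMax f t := isLocalMax_of_deriv_deriv_neg hneg hmin.deriv_eq_zero hf
  have hconst : f =ᶠ[𝓝 t] fun _ ↦ f t := by
    filter_upwards [hmin, hmax] with s hs₁ hs₂ using le_antisymm hs₂ hs₁
  have hzero : deriv (deriv f) t = 0 := by simp [hconst.deriv.deriv_eq]
  exact hneg.ne hzero

theorem closure_ball_diff_closedBall_subset {X : Type*} [PseudoMetricSpace X] (z : X) (r R : ℝ) :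
    closure (ball z R \ closedBall z r) ⊆ closedBall z R \ ball z r :=
  closure_minimal (sdiff_subset_sdiff ball_subset_closedBall ball_subset_closedBall)
    (isClosed_closedBall.sdiff isOpen_ball)

theorem frontier_ball_diff_closedBall_subset {X : Type*} [PseudoMetricSpace X] (z : X) (r R : ℝ) :
    frontier (ball z R \ closedBall z r) ⊆ sphere z r ∪ sphere z R := by
  intro y hy
  rw [(isOpen_ball.sdiff isClosed_closedBall).frontier_eq] at hy
  obtain ⟨hyR, hyr⟩ := closure_ball_diff_closedBall_subset z r R hy.1
  by_contra! hne
  simp only [mem_union, mem_sphere, not_or] at hne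
  exact hy.2 ⟨lt_of_le_of_ne hyR hne.2, fun h ↦ hyr (lt_of_le_of_ne h hne.1)⟩

theorem mem_ball_zero_diff_closedBall_zero_iff {F : Type*} [SeminormedAddCommGroup F] {x : F}
    {r R : ℝ} : x ∈ ball 0 R \ closedBall 0 r ↔ r < ‖x‖ ∧ ‖x‖ < R := by
  rw [Set.mem_sdiff, mem_ball_zero_iff, mem_closedBall_zero_iff, not_le, and_comm]

theorem le_norm_sub_of_mem_frontier {F : Type*} [SeminormedAddCommGroup F] {x y : F} {A : Set F}
    {r : ℝ} (hA : IsOpen A) (hball : ball x r ⊆ A) (hy : y ∈ frontier A) : r ≤ ‖y - x‖ := by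
  rw [hA.frontier_eq] at hy
  by_contra! hlt
  exact hy.2 (hball (mem_ball_iff_norm.mpr hlt))

section NormedSpace

variable {F : Type*} [NormedAddCommGroup F] [NormedSpace ℝ F] {f : F → ℝ} {x y z : F}

theorem closedBall_diff_ball_subset_closure {r R : ℝ} (hr : 0 < r) (hrR : r < R) :
    closedBall z R \ ball z r ⊆ closure (ball z R \ closedBall z r) := by
  rintro y ⟨hyR, hyr⟩
  rcases (mem_closedBall.mp hyR).lt_or_eq with hlt | heq
  · apply isOpen_ball.inter_closure (t := (closedBall z r)ᶜ)
    refine ⟨hlt, ?_⟩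
    rwa [closure_compl, interior_closedBall z hr.ne']
  · apply isClosed_closedBall.isOpen_compl.closure_inter
    rw [closure_ball z (hr.trans hrR).ne']
    exact ⟨hyR, fun h ↦ (heq.symm.trans_le (mem_closedBall.mp h)).not_gt hrR⟩

theorem setOf_norm_mem_Icc_eq_image {s t : ℝ} (hs : 0 < s) :
    {z : F | ‖z‖ ∈ Icc s t} = (fun q : ℝ × F ↦ q.1 • q.2) '' (Icc s t ×ˢ sphere 0 1) := by
  ext z
  constructor
  · intro hz
    have hz₀ : ‖z‖ ≠ 0 := (hs.trans_le hz.1).ne'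
    exact ⟨(‖z‖, ‖z‖⁻¹ • z), ⟨hz, by simp [norm_smul, hz₀]⟩, by simp [smul_smul, hz₀]⟩
  · rintro ⟨⟨a, w⟩, ⟨ha, hw⟩, rfl⟩
    have ha₀ : 0 < a := hs.trans_le ha.1
    simpa [norm_smul, mem_sphere_zero_iff_norm.mp hw, abs_of_pos ha₀] using ha

theorem isCompact_setOf_norm_mem_Icc [FiniteDimensional ℝ F] {s t : ℝ} (hs : 0 < s) :
    IsCompact {z : F | ‖z‖ ∈ Icc s t} := by
  rw [setOf_norm_mem_Icc_eq_image hs]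
  exact (isCompact_Icc.prod (isCompact_sphere _ _)).image (by fun_prop)

theorem isPreconnected_setOf_norm_mem_Icc {s t : ℝ} (hF : 1 < Module.rank ℝ F) (hs : 0 < s) :
    IsPreconnected {z : F | ‖z‖ ∈ Icc s t} := by
  rw [setOf_norm_mem_Icc_eq_image hs]
  exact (isPreconnected_Icc.prod (isConnected_sphere hF 0 zero_le_one).isPreconnected).image _
    (by fun_prop)

theorem differentiableAt_fderiv_apply (hf : ContDiffAt ℝ 2 f x) (e : F) :
    DifferentiableAt ℝ (fun y ↦ fderiv ℝ f y e) x :=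
  ((hf.fderiv_right (m := 1) (by norm_num)).differentiableAt one_ne_zero).clm_apply
    (differentiableAt_const e)

theorem fderiv_fderiv_apply_nonneg_of_isLocalMin (hf : ContDiffAt ℝ 2 f x)
    (hmin : IsLocalMin f x) (e : F) : 0 ≤ fderiv ℝ (fun y ↦ fderiv ℝ f y e) x e := by
  set line : ℝ → F := fun t ↦ x + t • e with line_def
  have hline (t : ℝ) : HasDerivAt line e t := by
    simpa only [one_smul] using ((hasDerivAt_id' t).smul_const e).const_add x
  have line_zero : line 0 = x := by simp [line_def]
  have hlim : Tendsto line (𝓝 0) (𝓝 x) := line_zero ▸ (hline 0).continuousAt.tendsto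
  have hderiv : deriv (f ∘ line) =ᶠ[𝓝 0] fun t ↦ fderiv ℝ f (line t) e := by
    filter_upwards [hlim.eventually (hf.eventually (by norm_num))] with t ht
    exact ((ht.differentiableAt two_ne_zero).hasFDerivAt.comp_hasDerivAt t (hline t)).deriv
  have hderiv₂ : deriv (deriv (f ∘ line)) 0 = fderiv ℝ (fun y ↦ fderiv ℝ f y e) x e := by
    have hfe := (differentiableAt_fderiv_apply hf e).hasFDerivAt
    rw [← line_zero] at hfe
    rw [hderiv.deriv_eq, ← line_zero]
    exact (hfe.comp_hasDerivAt 0 (hline 0)).deriv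
  rw [← hderiv₂]
  refine deriv_deriv_nonneg_of_isLocalMin ?_ ?_
  · exact ContinuousAt.comp (line_zero.symm ▸ hf.continuousAt) (hline 0).continuousAt
  · filter_upwards [hlim.eventually hmin] with t ht
    simpa [line_zero] using ht

end NormedSpace

variable {E : Type*} [NormedAddCommGroup E] [InnerProductSpace ℝ E] {f : E → ℝ} {x y z : E}

/-! ### Laplacian of radial functions -/

theorem hasFDerivAt_norm_rpow_of_ne_zero (hx : x ≠ 0) (p : ℝ) :
    HasFDerivAt (fun y : E ↦ ‖y‖ ^ p) ((p * ‖x‖ ^ (p - 2)) • innerSL ℝ x) x := by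
  have hsq (y : E) (q : ℝ) : (‖y‖ ^ 2) ^ q = ‖y‖ ^ (2 * q) := by
    rw [← Real.rpow_natCast, ← Real.rpow_mul (norm_nonneg y), Nat.cast_two]
  have h := (hasFDerivAt_id x).norm_sq.rpow_const (p := p / 2) (.inl (by simpa using hx))
  convert! h using 1
  · simp only [id, hsq, mul_div_cancel₀ p two_ne_zero]
  · ext v
    simp only [id, hsq, smul_apply, innerSL_apply_apply, smul_eq_mul, mul_sub,
      mul_div_cancel₀ p two_ne_zero]
    simp only [mul_one, ContinuousLinearMap.comp_id, coe_innerSL_apply, nsmul_eq_mul,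
      Nat.cast_ofNat]
    ring

theorem contDiffAt_norm_rpow (hx : x ≠ 0) (p : ℝ) : ContDiffAt ℝ 2 (fun y : E ↦ ‖y‖ ^ p) x :=
  (contDiffAt_norm ℝ hx).rpow_const_of_ne (norm_ne_zero_iff.mpr hx)

/-- The Newton kernel with pole `z`: the fundamental solution of `-Δ` without its normalizing
constant. The exponent is a natural number and the value at the pole is `0` (or `1`, in dimension
at most two). -/
noncomputable def newtonKernel (z y : E) : ℝ := (‖y - z‖ ^ (finrank ℝ E - 2))⁻¹

theorem newtonKernel_nonneg (z y : E) : 0 ≤ newtonKernel z y := by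
  unfold newtonKernel
  positivity

theorem newtonKernel_le_of_le_norm_sub {r : ℝ} (hr : 0 < r) (hy : r ≤ ‖y - z‖) :
    newtonKernel z y ≤ (r ^ (finrank ℝ E - 2))⁻¹ := by
  unfold newtonKernel
  gcongr

theorem le_newtonKernel_of_norm_sub_le {r : ℝ} (hyz : y ≠ z) (hy : ‖y - z‖ ≤ r) :
    (r ^ (finrank ℝ E - 2))⁻¹ ≤ newtonKernel z y := by
  have : 0 < ‖y - z‖ := norm_pos_iff.mpr (sub_ne_zero.mpr hyz)
  unfold newtonKernel
  gcongr

/-- The Green's function `newtonKernel x - H`, made continuous by freezing the Newton kernel at its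
value on the sphere of radius `r` inside that sphere. -/
noncomputable def truncatedGreen (r : ℝ) (x : E) (H : E → ℝ) (y : E) : ℝ :=
  (max ‖y - x‖ r ^ (finrank ℝ E - 2))⁻¹ - H y

theorem truncatedGreen_of_le {r : ℝ} {H : E → ℝ} (hy : r ≤ ‖y - x‖) :
    truncatedGreen r x H y = newtonKernel x y - H y := by
  rw [truncatedGreen, max_eq_left hy, newtonKernel]

theorem truncatedGreen_le {r : ℝ} {H : E → ℝ} (hyx : y ≠ x) :
    truncatedGreen r x H y ≤ newtonKernel x y - H y :=
  sub_le_sub_right (le_newtonKernel_of_norm_sub_le hyx (le_max_left _ r)) _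

variable [FiniteDimensional ℝ E]

theorem laplacian_eq_sum_fderiv_fderiv {ι : Type*} [Fintype ι] (b : OrthonormalBasis ι ℝ E)
    (hf : ContDiffAt ℝ 2 f x) :
    Δ f x = ∑ i, fderiv ℝ (fun y ↦ fderiv ℝ f y (b i)) x (b i) := by
  rw [laplacian_eq_iteratedFDeriv_orthonormalBasis f b]
  refine Finset.sum_congr rfl fun i _ ↦ ?_
  have hd := (hf.fderiv_right (m := 1) (by norm_num)).differentiableAt one_ne_zero
  rw [iteratedFDeriv_two_apply, fderiv_clm_apply hd (differentiableAt_const _)]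
  simp

theorem laplacian_nonneg_of_isLocalMin (hf : ContDiffAt ℝ 2 f x) (hmin : IsLocalMin f x) :
    0 ≤ Δ f x := by
  rw [laplacian_eq_sum_fderiv_fderiv (stdOrthonormalBasis ℝ E) hf]
  exact Finset.sum_nonneg fun i _ ↦ fderiv_fderiv_apply_nonneg_of_isLocalMin hf hmin _

theorem laplacian_norm_sq (x : E) : Δ (fun y : E ↦ ‖y‖ ^ 2) x = 2 * finrank ℝ E := by
  have hfirst (e : E) :
      (fun y : E ↦ fderiv ℝ (fun y ↦ ‖y‖ ^ 2) y e) = fun y ↦ 2 * innerSL ℝ e y := by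
    ext y
    simp [real_inner_comm]
  have hsecond (e : E) : fderiv ℝ (fun y ↦ 2 * innerSL ℝ e y) x e = 2 * ‖e‖ ^ 2 := by
    rw [((innerSL ℝ e).hasFDerivAt.const_mul 2).fderiv]
    simp
  rw [laplacian_eq_sum_fderiv_fderiv (stdOrthonormalBasis ℝ E) (contDiff_norm_sq ℝ).contDiffAt]
  simp only [hfirst, hsecond, OrthonormalBasis.norm_eq_one]
  simp [mul_comm]

theorem laplacian_norm_rpow (hx : x ≠ 0) (p : ℝ) :
    Δ (fun y : E ↦ ‖y‖ ^ p) x = p * (p + finrank ℝ E - 2) * ‖x‖ ^ (p - 2) := by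
  have hfirst (e : E) : (fun y ↦ fderiv ℝ (fun y : E ↦ ‖y‖ ^ p) y e) =ᶠ[𝓝 x]
      fun y ↦ p * (‖y‖ ^ (p - 2) * innerSL ℝ e y) := by
    filter_upwards [isOpen_ne.mem_nhds hx] with y hy
    simp [(hasFDerivAt_norm_rpow_of_ne_zero hy p).fderiv, real_inner_comm, mul_assoc]
  have hsecond (e : E) : fderiv ℝ (fun y ↦ fderiv ℝ (fun y : E ↦ ‖y‖ ^ p) y e) x e =
      p * (‖x‖ ^ (p - 2) * ‖e‖ ^ 2 + (p - 2) * ‖x‖ ^ (p - 2 - 2) * inner ℝ x e ^ 2) := by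
    have h := ((hasFDerivAt_norm_rpow_of_ne_zero hx (p - 2)).fun_mul
      (innerSL ℝ e).hasFDerivAt).const_mul p
    rw [(hfirst e).fderiv_eq, h.fderiv]
    simp only [coe_innerSL_apply, real_inner_comm, smul_add, add_apply, smul_apply,
      inner_self_eq_norm_sq_to_K, Real.ringHom_apply, smul_eq_mul]
    ring
  have hpow : ‖x‖ ^ (p - 2) = ‖x‖ ^ (p - 2 - 2) * ‖x‖ ^ 2 := by
    rw [← Real.rpow_add_natCast (norm_ne_zero_iff.mpr hx)]
    norm_num
  rw [laplacian_eq_sum_fderiv_fderiv (stdOrthonormalBasis ℝ E) (contDiffAt_norm_rpow hx p)]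
  simp only [hsecond, ← Finset.mul_sum, Finset.sum_add_distrib,
    OrthonormalBasis.sum_sq_inner_left, OrthonormalBasis.norm_eq_one]
  simp only [hpow, one_pow, Finset.sum_const, Finset.card_univ, Fintype.card_fin, nsmul_eq_mul,
    mul_one]
  ring

theorem laplacian_comp_sub_const (f : E → ℝ) (z y : E) :
    Δ (fun w ↦ f (w - z)) y = Δ f (y - z) := by
  simp [laplacian_eq_iteratedFDeriv_stdOrthonormalBasis, iteratedFDeriv_comp_sub]

theorem harmonicAt_comp_sub_const (hf : HarmonicAt f (y - z)) :
    HarmonicAt (fun w ↦ f (w - z)) y := by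
  refine ⟨hf.1.comp y (contDiffAt_id.sub contDiffAt_const), ?_⟩
  have hlim : Tendsto (fun w ↦ w - z) (𝓝 y) (𝓝 (y - z)) := tendsto_id.sub_const z
  filter_upwards [hlim.eventually hf.2] with w hw
  rw [laplacian_comp_sub_const, hw]
  rfl

theorem harmonicAt_norm_pow_inv (hE : 2 ≤ finrank ℝ E) (hx : x ≠ 0) :
    HarmonicAt (fun y : E ↦ (‖y‖ ^ (finrank ℝ E - 2))⁻¹) x := by
  have hrpow : (fun y : E ↦ (‖y‖ ^ (finrank ℝ E - 2))⁻¹) =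
      fun y ↦ ‖y‖ ^ (2 - finrank ℝ E : ℝ) := by
    ext y
    rw [← Real.rpow_natCast, ← Real.rpow_neg (norm_nonneg y), Nat.cast_sub hE, neg_sub,
      Nat.cast_two]
  rw [hrpow]
  refine ⟨contDiffAt_norm_rpow hx _, ?_⟩
  filter_upwards [isOpen_ne.mem_nhds hx] with y hy
  simp [laplacian_norm_rpow hy]

theorem harmonicAt_newtonKernel (hE : 2 ≤ finrank ℝ E) (hyz : y ≠ z) :
    HarmonicAt (newtonKernel z) y :=
  harmonicAt_comp_sub_const (harmonicAt_norm_pow_inv hE (sub_ne_zero.mpr hyz))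

/-! ### Comparison with harmonic barriers -/

/-- `v` is superharmonic below the level `c` on `U`: its truncation `min v c` is superharmonic, but
`v` is required to be twice differentiable only where `v < c`. Such a `v` may therefore be modified
freely above the level `c`, as long as it stays continuous, in particular near the pole of a
Green's function. -/
structure SuperharmonicBelow (c : ℝ) (v : E → ℝ) (U : Set E) : Prop where
  continuousOn : ContinuousOn v (closure U)
  contDiffAt : ∀ y ∈ U, v y < c → ContDiffAt ℝ 2 v y
  laplacian_nonpos : ∀ y ∈ U, v y < c → Δ v y ≤ 0

section Comparison

variable {b v : E → ℝ} {c : ℝ} {U V : Set E}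

theorem SuperharmonicBelow.mono (hv : SuperharmonicBelow c v U) (hVU : V ⊆ U) :
    SuperharmonicBelow c v V :=
  ⟨hv.continuousOn.mono (closure_mono hVU), fun y hy ↦ hv.contDiffAt y (hVU hy),
    fun y hy ↦ hv.laplacian_nonpos y (hVU hy)⟩

theorem SuperharmonicBelow.of_harmonicContOnCl (hv : HarmonicContOnCl v U) (c : ℝ) :
    SuperharmonicBelow c v U :=
  ⟨hv.continuousOn, fun _ hy _ ↦ hv.contDiffAt hy,
    fun y hy _ ↦ (hv.harmonicOnNhd y hy).2.eq_of_nhds.le⟩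

theorem SuperharmonicBelow.le_of_le_frontier [Nontrivial E] (hv : SuperharmonicBelow c v U)
    (hU : IsOpen U) (hbdd : Bornology.IsBounded U) (hb : HarmonicContOnCl b U)
    (hbc : ∀ y ∈ U, b y ≤ c) (hfr : ∀ y ∈ frontier U, b y ≤ v y) :
    ∀ y ∈ closure U, b y ≤ v y := by
  by_contra! ⟨y₀, hy₀, hlt⟩
  obtain ⟨R, -, hRU⟩ := hbdd.closure.exists_pos_norm_le
  obtain ⟨ε, hε, hεR⟩ : ∃ ε > 0, ε * R ^ 2 < b y₀ - v y₀ :=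
    exists_pos_mul_lt (sub_pos.mpr hlt) (R ^ 2) |>.imp fun ε h ↦ by rwa [mul_comm] at h
  -- The strictly subharmonic perturbation `ε ‖y‖²` makes an interior minimum impossible.
  set g : E → ℝ := (v - b) - ε • fun y ↦ ‖y‖ ^ 2 with g_def
  obtain ⟨a, ha, hmin⟩ := hbdd.isCompact_closure.exists_isMinOn ⟨y₀, hy₀⟩
    (((hv.continuousOn.sub hb.continuousOn).sub (by fun_prop)) : ContinuousOn g (closure U))
  have hva : v a < b a := by
    have hga : v a - b a - ε * ‖a‖ ^ 2 ≤ v y₀ - b y₀ - ε * ‖y₀‖ ^ 2 := hmin hy₀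
    have hεa : ε * ‖a‖ ^ 2 ≤ ε * R ^ 2 := by gcongr; exact hRU a ha
    have hεy₀ : 0 ≤ ε * ‖y₀‖ ^ 2 := by positivity
    linarith
  have haU : a ∈ U := by
    by_contra haU
    exact hva.not_ge (hfr a (hU.frontier_eq ▸ ⟨ha, haU⟩))
  have hvac : v a < c := hva.trans_le (hbc a haU)
  have hv₂ := hv.contDiffAt a haU hvac
  have hb₂ := hb.contDiffAt haU
  have hvb₂ : ContDiffAt ℝ 2 (v - b) a := hv₂.sub hb₂
  have hsq₂ : ContDiffAt ℝ 2 (fun y : E ↦ ‖y‖ ^ 2) a := (contDiff_norm_sq ℝ).contDiffAt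
  have hεsq₂ : ContDiffAt ℝ 2 (ε • fun y : E ↦ ‖y‖ ^ 2) a := hsq₂.const_smul ε
  have hnonneg : 0 ≤ Δ g a :=
    laplacian_nonneg_of_isLocalMin (hvb₂.sub hεsq₂)
      ((hmin.on_subset subset_closure).isLocalMin (hU.mem_nhds haU))
  have hlap : Δ g a = Δ v a - ε * (2 * finrank ℝ E) := by
    have hbΔ : Δ b a = 0 := (hb.harmonicOnNhd a haU).2.eq_of_nhds
    rw [g_def, hvb₂.laplacian_sub hεsq₂, hv₂.laplacian_sub hb₂, hbΔ,
      laplacian_smul ε hsq₂, laplacian_norm_sq, sub_zero, smul_eq_mul]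
  have hdim : (0 : ℝ) < finrank ℝ E := Nat.cast_pos.mpr finrank_pos
  have hpos : 0 < ε * (2 * finrank ℝ E) := by positivity
  linarith [hv.laplacian_nonpos a haU hvac]

end Comparison

section Annulus

variable {v : E → ℝ} {c c₀ r R α β : ℝ}

theorem SuperharmonicBelow.radial_le_of_le_spheres (hE : 2 ≤ finrank ℝ E) (hr : 0 < r)
    (hrR : r < R) (hv : SuperharmonicBelow c v (ball z R \ closedBall z r))
    (hc : ∀ y ∈ ball z R \ closedBall z r, α * newtonKernel z y + β ≤ c)
    (hin : ∀ y ∈ sphere z r, α * newtonKernel z y + β ≤ v y)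
    (hout : ∀ y ∈ sphere z R, α * newtonKernel z y + β ≤ v y) :
    ∀ y ∈ closedBall z R \ ball z r, α * newtonKernel z y + β ≤ v y := by
  have : Nontrivial E := nontrivial_of_finrank_pos (R := ℝ) (by lia)
  have hharm : HarmonicContOnCl (newtonKernel z) (ball z R \ closedBall z r) := by
    refine HarmonicOnNhd.harmonicContOnCl fun y hy ↦ harmonicAt_newtonKernel hE ?_
    rintro rfl
    exact (closure_ball_diff_closedBall_subset y r R hy).2 (mem_ball_self hr)
  intro y hy
  refine hv.le_of_le_frontier (isOpen_ball.sdiff isClosed_closedBall)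
    (isBounded_ball.subset sdiff_subset) ((hharm.fun_const_smul α).fun_add_const β) hc ?_ y
    (closedBall_diff_ball_subset_closure hr hrR hy)
  intro w hw
  exact (frontier_ball_diff_closedBall_subset z r R hw).elim (hin w) (hout w)

theorem SuperharmonicBelow.mul_one_sub_le (hE : 2 ≤ finrank ℝ E) (hr : 0 < r) (hrR : r < R)
    (hv : SuperharmonicBelow c v (ball z R \ closedBall z r)) (hc : 0 ≤ c)
    (hin : ∀ y ∈ sphere z r, 0 ≤ v y) (hout : ∀ y ∈ sphere z R, c ≤ v y) :
    ∀ y ∈ closedBall z R \ ball z r,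
      c * (1 - r ^ (finrank ℝ E - 2) / ‖y - z‖ ^ (finrank ℝ E - 2)) ≤ v y := by
  have hbarrier (y : E) : -(c * r ^ (finrank ℝ E - 2)) * newtonKernel z y + c =
      c * (1 - r ^ (finrank ℝ E - 2) / ‖y - z‖ ^ (finrank ℝ E - 2)) := by
    rw [newtonKernel]
    ring
  have hle (y : E) : -(c * r ^ (finrank ℝ E - 2)) * newtonKernel z y + c ≤ c := by
    have := newtonKernel_nonneg z y
    linarith [show 0 ≤ c * r ^ (finrank ℝ E - 2) * newtonKernel z y by positivity]
  intro y hy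
  rw [← hbarrier]
  refine hv.radial_le_of_le_spheres hE hr hrR (fun w _ ↦ hle w) (fun w hw ↦ ?_)
    (fun w hw ↦ (hle w).trans (hout w hw)) y hy
  rw [hbarrier, mem_sphere_iff_norm.mp hw, div_self (by positivity), sub_self, mul_zero]
  exact hin w hw

theorem exists_barrier_coefficients {m : ℕ} (hm : m ≠ 0) (hr : 0 < r) (hc : 0 ≤ c) :
    ∃ α β : ℝ, 0 ≤ α ∧ α * (r ^ m)⁻¹ + β = c ∧ α * ((4 * r) ^ m)⁻¹ + β = 0 ∧
      α * ((2 * r) ^ m)⁻¹ + β = c / (2 ^ m + 1) := by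
  have htwo : (1 : ℝ) < 2 ^ m := one_lt_pow₀ one_lt_two hm
  have hfour : (4 : ℝ) ^ m = 2 ^ m * 2 ^ m := by rw [← mul_pow]; norm_num
  have hD : 0 < (4 : ℝ) ^ m - 1 := by nlinarith
  have hvalue (t : ℝ) (ht : 0 < t) :
      c * (4 * r) ^ m / (4 ^ m - 1) * ((t * r) ^ m)⁻¹ + -c / (4 ^ m - 1) =
        c * ((4 ^ m / t ^ m - 1) / (4 ^ m - 1)) := by
    simp only [mul_pow]
    field_simp
    ring
  refine ⟨c * (4 * r) ^ m / (4 ^ m - 1), -c / (4 ^ m - 1), by positivity, ?_, ?_, ?_⟩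
  · simpa [hD.ne'] using hvalue 1 one_pos
  · simpa using hvalue 4 four_pos
  · have hne : (2 : ℝ) ^ m - 1 ≠ 0 := sub_ne_zero.mpr htwo.ne'
    have hfactor : (2 : ℝ) ^ m * 2 ^ m - 1 = (2 ^ m - 1) * (2 ^ m + 1) := by ring
    rw [hvalue 2 two_pos, hfour, hfactor]
    field_simp

/-- Compare with the radial barrier equal to `c` for `|y - z| = r` and to `0` for
`|y - z| = 4 * r`. -/
theorem SuperharmonicBelow.div_two_pow_add_one_le (hE : 3 ≤ finrank ℝ E) (hr : 0 < r)
    (hv : SuperharmonicBelow c₀ v (ball z (4 * r))) (hpos : ∀ y ∈ closedBall z (4 * r), 0 ≤ v y)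
    (hc : 0 ≤ c) (hcc₀ : c ≤ c₀) (hcv : ∀ y ∈ closedBall z r, c ≤ v y) :
    ∀ y ∈ closedBall z (2 * r), c / (2 ^ (finrank ℝ E - 2) + 1) ≤ v y := by
  intro y hy
  set m := finrank ℝ E - 2 with m_def
  by_cases hyr : y ∈ closedBall z r
  · exact (div_le_self hc (by simp)).trans (hcv y hyr)
  obtain ⟨α, β, hα, hinner, houter, hmiddle⟩ :=
    exists_barrier_coefficients (show m ≠ 0 by lia) hr hc
  have hannulus : y ∈ closedBall z (4 * r) \ ball z r :=
    ⟨closedBall_subset_closedBall (by linarith) hy, fun h ↦ hyr (ball_subset_closedBall h)⟩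
  have hyz : y ≠ z := by
    rintro rfl
    exact hyr (mem_closedBall_self hr.le)
  calc c / (2 ^ m + 1) = α * ((2 * r) ^ m)⁻¹ + β := hmiddle.symm
    _ ≤ α * newtonKernel z y + β := by
      gcongr
      exact le_newtonKernel_of_norm_sub_le hyz (mem_closedBall_iff_norm.mp hy)
    _ ≤ v y := by
      refine (hv.mono sdiff_subset).radial_le_of_le_spheres (by lia) hr (by linarith) ?_ ?_ ?_ y
        hannulus
      · rintro w ⟨-, hw⟩
        refine le_trans ?_ (hinner.trans_le hcc₀)
        gcongr
        refine newtonKernel_le_of_le_norm_sub hr (not_le.mp ?_).le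
        rwa [← mem_closedBall_iff_norm]
      · intro w hw
        rw [newtonKernel, mem_sphere_iff_norm.mp hw, ← m_def, hinner]
        exact hcv w (sphere_subset_closedBall hw)
      · intro w hw
        rw [newtonKernel, mem_sphere_iff_norm.mp hw, ← m_def, houter]
        exact hpos w (sphere_subset_closedBall hw)

end Annulus

/-! ### Harnack chains -/

section BallChain

variable {X : Type*} [PseudoMetricSpace X] {K : Set X} {r : ℝ} {k l : ℕ} {a b c : X}

/-- `BallChain K r k a b` says that `b` is reached from `a` by `k` jumps of length less than `r`
between points of `K`. -/
inductive BallChain (K : Set X) (r : ℝ) : ℕ → X → X → Prop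
  | refl {a : X} (ha : a ∈ K) : BallChain K r 0 a a
  | tail {k : ℕ} {a b c : X} (hab : BallChain K r k a b) (hc : c ∈ K) (hbc : dist b c < r) :
      BallChain K r (k + 1) a c

theorem BallChain.right_mem (h : BallChain K r k a b) : b ∈ K := by
  cases h <;> assumption

theorem BallChain.trans (hab : BallChain K r k a b) (hbc : BallChain K r l b c) :
    BallChain K r (k + l) a c := by
  induction hbc with
  | refl => exact hab
  | tail _ hc hlt ih => exact (ih hab).tail hc hlt

theorem BallChain.symm (h : BallChain K r k a b) : BallChain K r k b a := by
  induction h with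
  | refl ha => exact .refl ha
  | tail hab hc hlt ih =>
    rw [add_comm]
    rw [dist_comm] at hlt
    exact ((BallChain.refl hc).tail hab.right_mem hlt).trans ih

theorem BallChain.mono_length (hr : 0 < r) (h : BallChain K r k a b) (hkl : k ≤ l) :
    BallChain K r l a b := by
  induction hkl with
  | refl => exact h
  | step _ ih => exact ih.tail h.right_mem (by rwa [dist_self])

theorem exists_ballChain (hK : IsPreconnected K) (hr : 0 < r) (ha : a ∈ K) (hb : b ∈ K) :
    ∃ k, BallChain K r k a b := by
  refine hK.induction₂ (fun a b ↦ ∃ k, BallChain K r k a b) ?_ ?_ ?_ ha hb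
  · intro x hx
    filter_upwards [self_mem_nhdsWithin, mem_nhdsWithin_of_mem_nhds (ball_mem_nhds x hr)]
      with y hy hyx
    exact ⟨1, (BallChain.refl hx).tail hy (mem_ball'.mp hyx)⟩
  · rintro x y z - - - ⟨k, hxy⟩ ⟨l, hyz⟩
    exact ⟨k + l, hxy.trans hyz⟩
  · rintro x y - - ⟨k, hxy⟩
    exact ⟨k, hxy.symm⟩

theorem exists_forall_ballChain (hK : IsCompact K) (hK' : IsPreconnected K) (hr : 0 < r) :
    ∃ N, ∀ a ∈ K, ∀ b ∈ K, BallChain K r N a b := by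
  rcases K.eq_empty_or_nonempty with rfl | ⟨o, ho⟩
  · exact ⟨0, by simp⟩
  obtain ⟨N, hN⟩ : ∃ N, ∀ b ∈ K, BallChain K r N o b := by
    refine hK.induction_on (p := fun S ↦ ∃ N, ∀ b ∈ S, BallChain K r N o b) ⟨0, by simp⟩ ?_ ?_ ?_
    · rintro S T hST ⟨N, hN⟩
      exact ⟨N, fun b hb ↦ hN b (hST hb)⟩
    · rintro S T ⟨M, hM⟩ ⟨N, hN⟩
      refine ⟨max M N, fun b hb ↦ hb.elim (fun h ↦ ?_) fun h ↦ ?_⟩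
      · exact (hM b h).mono_length hr (le_max_left M N)
      · exact (hN b h).mono_length hr (le_max_right M N)
    · intro x hx
      obtain ⟨k, hk⟩ := exists_ballChain hK' hr ho hx
      exact ⟨K ∩ ball x r, inter_mem_nhdsWithin K (ball_mem_nhds x hr), k + 1,
        fun y hy ↦ hk.tail hy.1 (mem_ball'.mp hy.2)⟩
  exact ⟨N + N, fun a ha b hb ↦ (hN a ha).symm.trans (hN b hb)⟩

end BallChain

theorem SuperharmonicBelow.pow_mul_le_of_ballChain {v : E → ℝ} {c c₀ r : ℝ} {A K : Set E} {k : ℕ}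
    {a b : E} (hE : 3 ≤ finrank ℝ E) (hr : 0 < r) (hv : SuperharmonicBelow c₀ v A)
    (hpos : ∀ y ∈ closure A, 0 ≤ v y) (hK : ∀ z ∈ K, ball z (4 * r) ⊆ A) (hc : 0 ≤ c)
    (hcc₀ : c ≤ c₀) (hab : BallChain K r k a b) (ha : ∀ y ∈ closedBall a r, c ≤ v y) :
    ∀ y ∈ closedBall b r, (2 ^ (finrank ℝ E - 2) + 1 : ℝ)⁻¹ ^ k * c ≤ v y := by
  induction hab with
  | refl => simpa using ha
  | @tail k a b d hab _ hbd ih =>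
    set κ : ℝ := (2 ^ (finrank ℝ E - 2) + 1 : ℝ)⁻¹ with κ_def
    have hκ₀ : 0 ≤ κ := by positivity
    have hκ₁ : κ ≤ 1 := inv_le_one_of_one_le₀ (by simp)
    have hb : ball b (4 * r) ⊆ A := hK b hab.right_mem
    have hb' : closedBall b (4 * r) ⊆ closure A := by
      rw [← closure_ball b (by positivity)]
      exact closure_mono hb
    have hκc : κ ^ k * c ≤ c₀ := (mul_le_of_le_one_left hc (pow_le_one₀ hκ₀ hκ₁)).trans hcc₀
    intro y hy
    have hy' : y ∈ closedBall b (2 * r) := by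
      rw [mem_closedBall] at hy ⊢
      linarith [dist_triangle_right y b d]
    calc κ ^ (k + 1) * c = κ ^ k * c / (2 ^ (finrank ℝ E - 2) + 1) := by
          rw [κ_def]
          ring
      _ ≤ v y := (hv.mono hb).div_two_pow_add_one_le hE hr (fun w hw ↦ hpos w (hb' hw))
          (by positivity) hκc (ih ha) y hy'

/-! ### Green's functions -/

/-- `H` is the corrector of the domain `A` with pole `x`: the harmonic function agreeing with the
Newton kernel on the boundary, so that `newtonKernel x - H` is, up to a constant factor, the Green's
function of `A` with pole `x`. -/
structure IsCorrector (A : Set E) (x : E) (H : E → ℝ) : Prop where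
  harmonicContOnCl : HarmonicContOnCl H A
  eqOn_frontier : EqOn H (newtonKernel x) (frontier A)

section Corrector

variable {A K : Set E} {H : E → ℝ} {r : ℝ}

theorem IsCorrector.le_of_ball_subset [Nontrivial E] (hH : IsCorrector A x H) (hA : IsOpen A)
    (hbdd : Bornology.IsBounded A) (hr : 0 < r) (hball : ball x r ⊆ A) :
    ∀ y ∈ closure A, H y ≤ (r ^ (finrank ℝ E - 2))⁻¹ := by
  have hharm : HarmonicContOnCl (fun y ↦ (r ^ (finrank ℝ E - 2))⁻¹ - H y) A :=
    hH.harmonicContOnCl.fun_const_sub _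
  intro y hy
  refine sub_nonneg.mp <| (SuperharmonicBelow.of_harmonicContOnCl hharm 0).le_of_le_frontier hA hbdd
    (harmonicContOnCl_const (c := 0)) (fun _ _ ↦ le_rfl) (fun w hw ↦ ?_) y hy
  rw [hH.eqOn_frontier hw, sub_nonneg]
  exact newtonKernel_le_of_le_norm_sub hr (le_norm_sub_of_mem_frontier hA hball hw)

theorem IsCorrector.le_truncatedGreen [Nontrivial E] (hH : IsCorrector A x H) (hA : IsOpen A)
    (hbdd : Bornology.IsBounded A) (hr : 0 < r) (hball : ball x (2 * r) ⊆ A) :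
    ∀ y ∈ closure A, ‖y - x‖ ≤ r →
      (r ^ (finrank ℝ E - 2))⁻¹ - ((2 * r) ^ (finrank ℝ E - 2))⁻¹ ≤ truncatedGreen r x H y := by
  intro y hy hyr
  rw [truncatedGreen, max_eq_right hyr]
  exact sub_le_sub_left (hH.le_of_ball_subset hA hbdd (by positivity) hball y hy) _

theorem IsCorrector.superharmonicBelow_truncatedGreen (hE : 2 ≤ finrank ℝ E)
    (hH : IsCorrector A x H) (hA : IsOpen A) (hbdd : Bornology.IsBounded A) (hr : 0 < r)
    (hball : ball x (2 * r) ⊆ A) :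
    SuperharmonicBelow ((r ^ (finrank ℝ E - 2))⁻¹ - ((2 * r) ^ (finrank ℝ E - 2))⁻¹)
      (truncatedGreen r x H) A := by
  have : Nontrivial E := nontrivial_of_finrank_pos (R := ℝ) (by lia)
  have hcont : Continuous fun y : E ↦ (max ‖y - x‖ r ^ (finrank ℝ E - 2))⁻¹ :=
    Continuous.inv₀ (by fun_prop) fun y ↦ (pow_pos (lt_max_of_lt_right hr) _).ne'
  have hharm : ∀ y ∈ A,
      truncatedGreen r x H y < (r ^ (finrank ℝ E - 2))⁻¹ - ((2 * r) ^ (finrank ℝ E - 2))⁻¹ →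
      HarmonicAt (truncatedGreen r x H) y := by
    intro y hy hlt
    have hyr : r < ‖y - x‖ := by
      by_contra! hle
      exact hlt.not_ge (hH.le_truncatedGreen hA hbdd hr hball y (subset_closure hy) hle)
    have heq : truncatedGreen r x H =ᶠ[𝓝 y] newtonKernel x - H := by
      have hopen : IsOpen {w : E | r < ‖w - x‖} := isOpen_lt (by fun_prop) (by fun_prop)
      filter_upwards [hopen.mem_nhds hyr] with w hw using truncatedGreen_of_le (le_of_lt hw)
    rw [harmonicAt_congr_nhds heq]
    refine (harmonicAt_newtonKernel hE ?_).sub (hH.harmonicContOnCl.harmonicOnNhd y hy)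
    rintro rfl
    simp [hr.not_gt] at hyr
  exact ⟨hcont.continuousOn.sub hH.harmonicContOnCl.continuousOn,
    fun y hy hlt ↦ (hharm y hy hlt).1, fun y hy hlt ↦ (hharm y hy hlt).2.eq_of_nhds.le⟩

theorem IsCorrector.truncatedGreen_nonneg (hE : 2 ≤ finrank ℝ E) (hH : IsCorrector A x H)
    (hA : IsOpen A) (hbdd : Bornology.IsBounded A) (hr : 0 < r) (hball : ball x (2 * r) ⊆ A) :
    ∀ y ∈ closure A, 0 ≤ truncatedGreen r x H y := by
  have : Nontrivial E := nontrivial_of_finrank_pos (R := ℝ) (by lia)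
  refine (hH.superharmonicBelow_truncatedGreen hE hA hbdd hr hball).le_of_le_frontier hA hbdd
    (harmonicContOnCl_const (c := 0)) (fun _ _ ↦ ?_) fun y hy ↦ ?_
  · rw [sub_nonneg]
    gcongr
    linarith
  · have hyr : 2 * r ≤ ‖y - x‖ := le_norm_sub_of_mem_frontier hA hball hy
    rw [truncatedGreen_of_le (by linarith), hH.eqOn_frontier hy, sub_self]

theorem IsCorrector.le_newtonKernel (hE : 2 ≤ finrank ℝ E) (hH : IsCorrector A x H)
    (hA : IsOpen A) (hbdd : Bornology.IsBounded A) (hx : x ∈ A) :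
    ∀ y ∈ closure A, y ≠ x → H y ≤ newtonKernel x y := by
  intro y hy hyx
  obtain ⟨ε, hε, hball⟩ := isOpen_iff.mp hA x hx
  have hnonneg := hH.truncatedGreen_nonneg hE hA hbdd (half_pos hε)
    (by rwa [mul_div_cancel₀ ε two_ne_zero]) y hy
  exact sub_nonneg.mp (hnonneg.trans (truncatedGreen_le hyx))

theorem exists_pos_le_newtonKernel_sub_corrector (hE : 3 ≤ finrank ℝ E) (hK : IsCompact K)
    (hK' : IsPreconnected K) (hr : 0 < r) :
    ∃ c > 0, ∀ A : Set E, IsOpen A → Bornology.IsBounded A → (∀ z ∈ K, ball z (4 * r) ⊆ A) →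
      ∀ x ∈ K, ∀ H, IsCorrector A x H → ∀ y ∈ K, y ≠ x → c ≤ newtonKernel x y - H y := by
  have : Nontrivial E := nontrivial_of_finrank_pos (R := ℝ) (by lia)
  obtain ⟨N, hN⟩ := exists_forall_ballChain hK hK' hr
  set c₀ := (r ^ (finrank ℝ E - 2))⁻¹ - ((2 * r) ^ (finrank ℝ E - 2))⁻¹
  have hc₀ : 0 < c₀ := by
    refine sub_pos.mpr (inv_strictAnti₀ (by positivity) (pow_lt_pow_left₀ ?_ hr.le (by lia)))
    linarith
  refine ⟨(2 ^ (finrank ℝ E - 2) + 1 : ℝ)⁻¹ ^ N * c₀, by positivity, ?_⟩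
  intro A hA hbdd hKA x hx H hH y hy hyx
  have hball : ball x (2 * r) ⊆ A := (ball_subset_ball (by linarith)).trans (hKA x hx)
  have hballr : closedBall x r ⊆ A := (closedBall_subset_ball (by linarith)).trans hball
  calc (2 ^ (finrank ℝ E - 2) + 1 : ℝ)⁻¹ ^ N * c₀ ≤ truncatedGreen r x H y :=
        (hH.superharmonicBelow_truncatedGreen (by lia) hA hbdd hr hball).pow_mul_le_of_ballChain hE
          hr (hH.truncatedGreen_nonneg (by lia) hA hbdd hr hball) hKA hc₀.le le_rfl (hN x hx y hy)
          (fun w hw ↦ hH.le_truncatedGreen hA hbdd hr hball w (subset_closure (hballr hw))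
            (mem_closedBall_iff_norm.mp hw)) y (mem_closedBall_self hr.le)
    _ ≤ newtonKernel x y - H y := truncatedGreen_le hyx

end Corrector

section AnnularDomain

variable {ρ ρ₀ ρ₂ c : ℝ} {H : E → ℝ}

theorem IsCorrector.mul_one_sub_le (hE : 2 ≤ finrank ℝ E) (hρ : 0 < ρ) (hρ₀ : ρ < ρ₀)
    (hρ₀x : ρ₀ < ‖x‖) (hx : ‖x‖ < 1) (hH : IsCorrector (ball 0 1 \ closedBall 0 ρ) x H)
    (hc : 0 ≤ c) (hsphere : ∀ y, ‖y‖ = ρ₀ → c ≤ newtonKernel x y - H y) :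
    ∀ y, ρ ≤ ‖y‖ → ‖y‖ ≤ ρ₀ →
      c * (1 - ρ ^ (finrank ℝ E - 2) / ‖y‖ ^ (finrank ℝ E - 2)) ≤ newtonKernel x y - H y := by
  have hne {y : E} (hy : ‖y‖ ≤ ρ₀) : y ≠ x := by
    rintro rfl
    exact hρ₀x.not_ge hy
  have hsub : ball (0 : E) ρ₀ \ closedBall 0 ρ ⊆ ball 0 1 \ closedBall 0 ρ :=
    sdiff_subset_sdiff_left (ball_subset_ball (hρ₀x.trans hx).le)
  have hharm : HarmonicContOnCl (newtonKernel x - H) (ball 0 ρ₀ \ closedBall 0 ρ) := by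
    refine .sub (HarmonicOnNhd.harmonicContOnCl fun y hy ↦ harmonicAt_newtonKernel hE (hne ?_))
      (hH.harmonicContOnCl.mono hsub)
    exact mem_closedBall_zero_iff.mp (closure_ball_diff_closedBall_subset 0 ρ ρ₀ hy).1
  intro y hyρ hyρ₀
  have hbound := (SuperharmonicBelow.of_harmonicContOnCl hharm c).mul_one_sub_le hE hρ hρ₀ hc
    (fun w hw ↦ ?_) (fun w hw ↦ hsphere w (mem_sphere_zero_iff_norm.mp hw)) y
    ⟨by simpa using hyρ₀, by simpa using hyρ⟩
  · simpa using hbound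
  · have hwρ : ‖w‖ = ρ := mem_sphere_zero_iff_norm.mp hw
    have hwcl : w ∈ closure (ball (0 : E) 1 \ closedBall 0 ρ) :=
      closedBall_diff_ball_subset_closure hρ (by linarith)
      ⟨mem_closedBall_zero_iff.mpr (by linarith), by simp [hwρ]⟩
    exact sub_nonneg.mpr (hH.le_newtonKernel hE (isOpen_ball.sdiff isClosed_closedBall)
      (isBounded_ball.subset sdiff_subset)
      (mem_ball_zero_diff_closedBall_zero_iff.mpr ⟨by linarith, hx⟩) w hwcl (hne (by linarith)))

theorem exists_pos_mul_one_sub_le_annulus (hE : 3 ≤ finrank ℝ E) (hρ₀ : 0 < ρ₀) (hρ₂ : ρ₂ < 1) :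
    ∃ c > 0, ∀ ρ, 0 < ρ → 2 * ρ < ρ₀ → ∀ x : E, ρ₀ < ‖x‖ → ‖x‖ ≤ ρ₂ →
      ∀ H, IsCorrector (ball 0 1 \ closedBall 0 ρ) x H → ∀ y, ρ ≤ ‖y‖ → ‖y‖ ≤ ρ₀ →
        c * (1 - ρ ^ (finrank ℝ E - 2) / ‖y‖ ^ (finrank ℝ E - 2)) ≤ newtonKernel x y - H y := by
  have hrank : 1 < Module.rank ℝ E := by
    rw [← finrank_eq_rank]
    exact_mod_cast (by lia : 1 < finrank ℝ E)
  have hr : 0 < min (1 - ρ₂) (ρ₀ / 2) / 4 := by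
    have := lt_min (sub_pos.mpr hρ₂) (half_pos hρ₀)
    positivity
  obtain ⟨c, hc, hgreen⟩ := exists_pos_le_newtonKernel_sub_corrector hE
    (isCompact_setOf_norm_mem_Icc (t := ρ₂) hρ₀) (isPreconnected_setOf_norm_mem_Icc hrank hρ₀) hr
  refine ⟨c, hc, fun ρ hρ hρρ₀ x hρ₀x hxρ₂ H hH ↦ ?_⟩
  have hballs : ∀ z : E, ‖z‖ ∈ Icc ρ₀ ρ₂ →
      ball z (4 * (min (1 - ρ₂) (ρ₀ / 2) / 4)) ⊆ ball 0 1 \ closedBall 0 ρ := by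
    rintro z ⟨hρ₀z, hzρ₂⟩ w hw
    rw [mul_div_cancel₀ _ four_ne_zero, mem_ball_iff_norm, lt_min_iff] at hw
    have h₁ := norm_sub_norm_le w z
    have h₂ := norm_sub_norm_le z w
    rw [norm_sub_rev] at h₂
    exact mem_ball_zero_diff_closedBall_zero_iff.mpr ⟨by linarith, by linarith⟩
  refine hH.mul_one_sub_le (by lia) hρ (by linarith) hρ₀x (hxρ₂.trans_lt hρ₂) hc.le fun y hy ↦ ?_
  refine hgreen _ (isOpen_ball.sdiff isClosed_closedBall) (isBounded_ball.subset sdiff_subset)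
    hballs x ⟨hρ₀x.le, hxρ₂⟩ H hH y ⟨hy.ge, by linarith⟩ ?_
  rintro rfl
  exact hρ₀x.ne' hy

end AnnularDomain

section Euclidean

variable {n : ℕ}

theorem laplacian_eq_lap {f : EuclideanSpace ℝ (Fin n) → ℝ} {x : EuclideanSpace ℝ (Fin n)}
    (hf : ContDiffAt ℝ 2 f x) : Δ f x = lap f x := by
  simp [laplacian_eq_sum_fderiv_fderiv (EuclideanSpace.basisFun (Fin n) ℝ) hf, lap]

theorem newtonKernel_eq_norm_rpow (hn : 2 ≤ n) (x y : EuclideanSpace ℝ (Fin n)) :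
    newtonKernel x y = ‖x - y‖ ^ ((2 : ℝ) - n) := by
  rw [newtonKernel, finrank_euclideanSpace_fin, norm_sub_rev, ← Real.rpow_natCast,
    ← Real.rpow_neg (norm_nonneg _), Nat.cast_sub hn, neg_sub, Nat.cast_two]

theorem IsCorrector.of_lap_eq_zero (hn : 2 ≤ n) {A : Set (EuclideanSpace ℝ (Fin n))}
    (hA : IsOpen A) {x : EuclideanSpace ℝ (Fin n)} {H : EuclideanSpace ℝ (Fin n) → ℝ}
    (hcont : ContinuousOn H (closure A)) (hdiff : ContDiffOn ℝ 2 H A)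
    (hlap : ∀ y ∈ A, lap H y = 0) (hfr : ∀ y ∈ frontier A, H y = ‖x - y‖ ^ ((2 : ℝ) - n)) :
    IsCorrector A x H := by
  refine ⟨⟨fun y hy ↦ ⟨hdiff.contDiffAt (hA.mem_nhds hy), ?_⟩, hcont⟩, fun y hy ↦ ?_⟩
  · filter_upwards [hA.mem_nhds hy] with w hw
    rw [laplacian_eq_lap (hdiff.contDiffAt (hA.mem_nhds hw)), hlap w hw, Pi.zero_apply]
  · rw [hfr y hy, newtonKernel_eq_norm_rpow hn]

theorem green_normalization_pos (hn : 3 ≤ n) :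
    0 < 1 / ((n : ℝ) * ((n : ℝ) - 2) *
      (volume (ball (0 : EuclideanSpace ℝ (Fin n)) 1)).toReal) := by
  have hn' : (3 : ℝ) ≤ n := by exact_mod_cast hn
  have hvol : 0 < (volume (ball (0 : EuclideanSpace ℝ (Fin n)) 1)).toReal :=
    ENNReal.toReal_pos (measure_ball_pos _ _ one_pos).ne' measure_ball_lt_top.ne
  have hsub : 0 < (n : ℝ) - 2 := by linarith
  positivity

end Euclidean

end

/-- uniform lower bound for the Green's function of the annulus
`B_1 \ B_ρ`, independent of the inner radius `ρ`. -/
theorem green_function_lower_bound (n : ℕ) (hn : 3 ≤ n) (ρ₀ ρ₁ ρ₂ : ℝ)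
    (h0 : 0 < ρ₀) (h01 : ρ₀ < ρ₁) (h12 : ρ₁ < ρ₂) (h21 : ρ₂ < 1) :
    ∃ C : ℝ, 1 < C ∧ ∃ C' : ℝ, 1 < C' ∧
      ∀ ρ : ℝ, 0 < ρ → 2 * ρ < ρ₀ →
        ∀ h G : EuclideanSpace ℝ (Fin n) → EuclideanSpace ℝ (Fin n) → ℝ,
          (∀ x ∈ (ball (0 : EuclideanSpace ℝ (Fin n)) 1 \ closedBall 0 ρ),
            ContinuousOn (h x)
              (closure (ball (0 : EuclideanSpace ℝ (Fin n)) 1 \ closedBall 0 ρ)) ∧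
            ContDiffOn ℝ 2 (h x) (ball (0 : EuclideanSpace ℝ (Fin n)) 1 \ closedBall 0 ρ) ∧
            (∀ y ∈ (ball (0 : EuclideanSpace ℝ (Fin n)) 1 \ closedBall 0 ρ),
              lap (h x) y = 0) ∧
            (∀ y ∈ frontier (ball (0 : EuclideanSpace ℝ (Fin n)) 1 \ closedBall 0 ρ),
              h x y = ‖x - y‖ ^ ((2 : ℝ) - n))) →
          (∀ x y : EuclideanSpace ℝ (Fin n), G x y =
            (1 / ((n : ℝ) * ((n : ℝ) - 2) *
              (volume (ball (0 : EuclideanSpace ℝ (Fin n)) 1)).toReal)) *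
              (‖x - y‖ ^ ((2 : ℝ) - n) - h x y)) →
          (∀ x y : EuclideanSpace ℝ (Fin n),
              ρ ≤ ‖y‖ → ‖y‖ ≤ ρ₀ → ρ₁ ≤ ‖x‖ → ‖x‖ ≤ ρ₂ →
                (1 / C) * (1 - ρ ^ (n - 2) / ‖y‖ ^ (n - 2)) ≤ G x y) ∧
          (∀ x y : EuclideanSpace ℝ (Fin n),
              2 * ρ ≤ ‖y‖ → ‖y‖ ≤ ρ₀ → ρ₁ ≤ ‖x‖ → ‖x‖ ≤ ρ₂ →
                1 / C' ≤ G x y) := by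
  have hdim : Module.finrank ℝ (EuclideanSpace ℝ (Fin n)) = n := finrank_euclideanSpace_fin
  obtain ⟨c, hc, hannulus⟩ := exists_pos_mul_one_sub_le_annulus
    (E := EuclideanSpace ℝ (Fin n)) (hn.trans_eq hdim.symm) h0 h21
  have hk := green_normalization_pos hn
  obtain ⟨C, hC, hCk⟩ := exists_one_lt_one_div_le (mul_pos hk hc)
  refine ⟨C, hC, 2 * C, by linarith, fun ρ hρ hρρ₀ h G hh hG ↦ ?_⟩
  have hbound (x y : EuclideanSpace ℝ (Fin n)) (hy : ρ ≤ ‖y‖) (hyρ₀ : ‖y‖ ≤ ρ₀) (hx : ρ₁ ≤ ‖x‖)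
      (hxρ₂ : ‖x‖ ≤ ρ₂) : 1 / C * (1 - ρ ^ (n - 2) / ‖y‖ ^ (n - 2)) ≤ G x y := by
    obtain ⟨hcont, hdiff, hlap, hfr⟩ :=
      hh x (mem_ball_zero_diff_closedBall_zero_iff.mpr ⟨by linarith, by linarith⟩)
    have hxy := hannulus ρ hρ hρρ₀ x (h01.trans_le hx) hxρ₂ (h x)
      (.of_lap_eq_zero (by lia) (isOpen_ball.sdiff isClosed_closedBall) hcont hdiff hlap hfr)
      y hy hyρ₀
    rw [hdim, newtonKernel_eq_norm_rpow (by lia)] at hxy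
    have hnonneg : 0 ≤ 1 - ρ ^ (n - 2) / ‖y‖ ^ (n - 2) :=
      sub_nonneg.mpr (div_le_one_of_le₀ (by gcongr) (by positivity))
    rw [hG]
    refine (mul_le_mul_of_nonneg_right hCk hnonneg).trans ?_
    rw [mul_assoc]
    exact mul_le_mul_of_nonneg_left hxy hk.le
  refine ⟨hbound, fun x y hy hyρ₀ hx hxρ₂ ↦ le_trans ?_ (hbound x y (by linarith) hyρ₀ hx hxρ₂)⟩
  rw [mul_comm, ← one_div_mul_one_div]
  exact mul_le_mul_of_nonneg_left (half_le_one_sub_pow_div_pow (by lia) hρ hy) (by positivity)
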